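/- The set Γ_s^(2) is a subgroup of U(2,1;J): it contains the identity matrix, and it is closed under matrix multiplication and under matrix inversion. -/

import Mathlib

noncomputable section

open Matrix

/-- The Hermitian form matrix `J`. -/
def matJ : Matrix (Fin 3) (Fin 3) ℂ := !![0,0,1; 0,1,0; 1,0,0]

/-- Membership in `U(2,1;J)`. -/
def inU21 (M : Matrix (Fin 3) (Fin 3) ℂ) : Prop := IsUnit M ∧ Mᴴ * matJ * M = matJ

/-- `i√2`. -/
def isq2 : ℂ := Complex.I * (Real.sqrt 2 : ℂ)

/-- Membership in the ring of integers `O₂ = ℤ + ℤ·i√2`. -/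
def inO2 (z : ℂ) : Prop := ∃ a b : ℤ, z = (a : ℂ) + (b : ℂ) * isq2

/-- The sister group `Γ_s^(2)`. -/
def GammaS2 (M : Matrix (Fin 3) (Fin 3) ℂ) : Prop :=
  inU21 M ∧ inO2 (M 0 0) ∧ inO2 (M 0 1) ∧ inO2 (M 1 1) ∧ inO2 (M 1 2) ∧
    inO2 (M 2 2) ∧ inO2 (isq2 * M 0 2) ∧ inO2 (M 1 0 / isq2) ∧
    inO2 (M 2 0 / isq2) ∧ inO2 (M 2 1 / isq2)

/-!
The conditions on the entries of `M ∈ Γ_s^(2)` read `M i j ∈ (i√2) ^ e i j • O₂` for integers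
with `e i i = 0` and `e i k ≤ e i j + e j k`; these inequalities make the matrices satisfying
them a ring. If `M` preserves `J`, then `M⁻¹ = J * Mᴴ * J`, the conjugate of the reflection of
`M` in its antidiagonal. The exponents are symmetric under that reflection, and conjugation
preserves `O₂` and multiplies `i√2` by the unit `-1`, so `M⁻¹` satisfies the same conditions.
-/

section FormUnitaryGroup

variable {n A : Type*} [Fintype n] [DecidableEq n] [CommRing A] [StarRing A]

/-- The unitary group of the sesquilinear form with Gram matrix `J`. -/
def formUnitaryGroup (J : Matrix n n A) : Subgroup (GL n A) where
  carrier := {g | g.valᴴ * J * g.val = J}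
  one_mem' := by simp
  mul_mem' {g h} hg hh := by
    calc (g * h).valᴴ * J * (g * h).val
        = h.valᴴ * (g.valᴴ * J * g.val) * h.val := by
          simp only [Units.val_mul, conjTranspose_mul, Matrix.mul_assoc]
      _ = J := by rw [hg, hh]
  inv_mem' {g} hg := by
    calc g⁻¹.valᴴ * J * g⁻¹.val
        = g⁻¹.valᴴ * (g.valᴴ * J * g.val) * g⁻¹.val := by rw [hg]
      _ = (g * g⁻¹).valᴴ * J * (g * g⁻¹).val := by
          simp only [Units.val_mul, conjTranspose_mul, Matrix.mul_assoc]
      _ = J := by simp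

lemma mem_formUnitaryGroup {J : Matrix n n A} {g : GL n A} :
    g ∈ formUnitaryGroup J ↔ g.valᴴ * J * g.val = J :=
  Iff.rfl

lemma coe_inv_eq_submatrix_of_mem_formUnitaryGroup {σ : Equiv.Perm n} {g : GL n A}
    (hg : g ∈ formUnitaryGroup (σ.permMatrix A)) :
    g⁻¹.val = g.valᴴ.submatrix σ.symm σ.symm := by
  have form_mul_inv : σ.permMatrix A * g⁻¹.val = g.valᴴ * σ.permMatrix A :=
    (Units.mul_inv_eq_iff_eq_mul g).2 (mem_formUnitaryGroup.1 hg).symm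
  rw [PEquiv.toMatrix_toPEquiv_mul, PEquiv.mul_toMatrix_toPEquiv] at form_mul_inv
  ext i j
  simpa using congrFun₂ form_mul_inv (σ.symm i) j

end FormUnitaryGroup

/-- An exponent matrix: the additive conditions on `e` under which the matrices whose
`(i, j)` entry is divisible by `s ^ e i j` form a ring. -/
structure IsExponentMatrix {ι : Type*} (e : ι → ι → ℤ) : Prop where
  diag : ∀ i, e i i = 0
  triangle : ∀ i j k, e i k ≤ e i j + e j k

lemma zpow_mem_of_nonneg {G S : Type*} [DivInvMonoid G] [SetLike S G] [SubmonoidClass S G]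
    {N : S} {s : G} (hs : s ∈ N) {m : ℤ} (hm : 0 ≤ m) : s ^ m ∈ N := by
  lift m to ℕ using hm
  simpa only [zpow_natCast] using pow_mem hs m

lemma mul_div_zpow_mem {G S : Type*} [CommGroupWithZero G] [SetLike S G] [SubmonoidClass S G]
    {N : S} {s : G} (hs₀ : s ≠ 0) (hs : s ∈ N) {a b c : ℤ} (habc : c ≤ a + b) {x y : G}
    (hx : x / s ^ a ∈ N) (hy : y / s ^ b ∈ N) : x * y / s ^ c ∈ N := by
  have factor : x * y / s ^ c = x / s ^ a * (y / s ^ b) * s ^ (a + b - c) := by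
    rw [zpow_sub₀ hs₀, zpow_add₀ hs₀]
    field_simp
  rw [factor]
  exact mul_mem (mul_mem hx hy) (zpow_mem_of_nonneg hs (sub_nonneg.2 habc))

section TiledOrder

variable {ι K : Type*} [Field K] {R : Subring K} {s : K}

lemma star_div_zpow_mem [StarRing K] (hR : ∀ x ∈ R, star x ∈ R) (u : Rˣ)
    (hu : star s = (u : R) * s) {m : ℤ} {x : K} (hx : x / s ^ m ∈ R) :
    star x / s ^ m ∈ R := by
  let v : Kˣ := Units.map (R.subtype : R →* K) u
  have v_zpow_mem : (v : K) ^ m ∈ R := by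
    rw [← Units.val_zpow_eq_zpow_val, ← map_zpow]
    exact SetLike.coe_mem ((u ^ m : Rˣ) : R)
  have star_s : star s = v * s := hu
  have factor : star x / s ^ m = star (x / s ^ m) * (v : K) ^ m := by
    rw [star_div₀, star_zpow₀, star_s, mul_zpow]
    field_simp
  rw [factor]
  exact mul_mem (hR _ hx) v_zpow_mem

variable [Fintype ι] [DecidableEq ι] {e : ι → ι → ℤ}

/-- The tiled order of matrices whose `(i, j)` entry lies in the fractional ideal
`s ^ e i j • R`; membership is tested by dividing by `s ^ e i j`. -/
def tiledOrder (hs₀ : s ≠ 0) (hs : s ∈ R) (he : IsExponentMatrix e) :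
    Subring (Matrix ι ι K) where
  carrier := {M | ∀ i j, M i j / s ^ e i j ∈ R}
  zero_mem' i j := by simp
  one_mem' i j := by
    obtain rfl | hij := eq_or_ne i j
    · simp [he.diag]
    · simp [hij]
  add_mem' hM hN i j := by
    rw [Matrix.add_apply, add_div]
    exact add_mem (hM i j) (hN i j)
  neg_mem' hM i j := by
    rw [Matrix.neg_apply, neg_div]
    exact neg_mem (hM i j)
  mul_mem' hM hN i k := by
    rw [Matrix.mul_apply, Finset.sum_div]
    exact sum_mem fun j _ => mul_div_zpow_mem hs₀ hs (he.triangle i j k) (hM i j) (hN j k)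

lemma mem_tiledOrder {hs₀ : s ≠ 0} {hs : s ∈ R} {he : IsExponentMatrix e} {M : Matrix ι ι K} :
    M ∈ tiledOrder hs₀ hs he ↔ ∀ i j, M i j / s ^ e i j ∈ R :=
  Iff.rfl

lemma conjTranspose_submatrix_mem_tiledOrder [StarRing K] {hs₀ : s ≠ 0} {hs : s ∈ R}
    {he : IsExponentMatrix e} (hR : ∀ x ∈ R, star x ∈ R) (u : Rˣ) (hu : star s = (u : R) * s)
    {τ : ι → ι} (hτ : ∀ i j, e (τ j) (τ i) = e i j) {M : Matrix ι ι K}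
    (hM : M ∈ tiledOrder hs₀ hs he) : Mᴴ.submatrix τ τ ∈ tiledOrder hs₀ hs he := by
  intro i j
  rw [submatrix_apply, conjTranspose_apply, ← hτ i j]
  exact star_div_zpow_mem hR u hu (hM (τ j) (τ i))

end TiledOrder

lemma isq2_mul_self : isq2 * isq2 = -2 := by
  have sqrt_mul_self : (Real.sqrt 2 : ℂ) * Real.sqrt 2 = 2 := by
    exact_mod_cast Real.mul_self_sqrt zero_le_two
  rw [isq2, mul_mul_mul_comm, Complex.I_mul_I, sqrt_mul_self, neg_one_mul]

lemma isq2_ne_zero : isq2 ≠ 0 := by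
  simp [isq2]

lemma star_isq2 : star isq2 = -isq2 := by
  simp [isq2]

/-- The ring of integers `O₂` of `ℚ(i√2)`, realised as the image of `ℤ√(-2)` in `ℂ`. -/
def ringO2 : Subring ℂ :=
  (Zsqrtd.lift ⟨isq2, by exact_mod_cast isq2_mul_self⟩ : ℤ√(-2) →+* ℂ).range

lemma mem_ringO2 {z : ℂ} : z ∈ ringO2 ↔ inO2 z := by
  constructor
  · rintro ⟨w, rfl⟩
    exact ⟨w.re, w.im, rfl⟩
  · rintro ⟨a, b, rfl⟩
    exact ⟨⟨a, b⟩, rfl⟩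

lemma isq2_mem_ringO2 : isq2 ∈ ringO2 :=
  mem_ringO2.2 ⟨0, 1, by simp⟩

lemma star_mem_ringO2 : ∀ z ∈ ringO2, star z ∈ ringO2 := by
  simp only [mem_ringO2]
  rintro _ ⟨a, b, rfl⟩
  refine ⟨a, -b, ?_⟩
  rw [star_add, star_mul', star_isq2]
  simp

/-- The divisibility by powers of `i√2` that `Γ_s^(2)` imposes on the entries of its elements. -/
def sisterExponent : Fin 3 → Fin 3 → ℤ :=
  ![![0, 0, -1], ![1, 0, 0], ![1, 1, 0]]

lemma isExponentMatrix_sisterExponent : IsExponentMatrix sisterExponent :=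
  ⟨by decide, by decide⟩

lemma sisterExponent_rev (i j : Fin 3) :
    sisterExponent j.rev i.rev = sisterExponent i j := by
  revert i j
  decide

/-- The tiled order over `O₂` that cuts `Γ_s^(2)` out of `U(2,1;J)`. -/
def sisterOrder : Subring (Matrix (Fin 3) (Fin 3) ℂ) :=
  tiledOrder isq2_ne_zero isq2_mem_ringO2 isExponentMatrix_sisterExponent

lemma mem_sisterOrder {M : Matrix (Fin 3) (Fin 3) ℂ} :
    M ∈ sisterOrder ↔ inO2 (M 0 0) ∧ inO2 (M 0 1) ∧ inO2 (M 1 1) ∧ inO2 (M 1 2) ∧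
      inO2 (M 2 2) ∧ inO2 (isq2 * M 0 2) ∧ inO2 (M 1 0 / isq2) ∧
      inO2 (M 2 0 / isq2) ∧ inO2 (M 2 1 / isq2) := by
  rw [sisterOrder, mem_tiledOrder]
  simp only [sisterExponent, Int.reduceNeg, cons_val', cons_val_fin_one, mem_ringO2,
    Fin.forall_fin_succ, Fin.isValue, cons_val_zero, cons_val_succ, Fin.succ_zero_eq_one,
    Fin.succ_one_eq_two, IsEmpty.forall_iff, and_true, zpow_ofNat, pow_zero, div_one,
    _root_.zpow_neg, pow_one, div_inv_eq_mul, mul_comm isq2]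
  tauto

lemma matJ_eq_permMatrix : matJ = (Fin.revPerm : Equiv.Perm (Fin 3)).permMatrix ℂ := by
  ext i j
  fin_cases i <;> fin_cases j <;> simp [matJ, PEquiv.toMatrix_apply]

/-- The sister group `Γ_s^(2)` as a subgroup of `GL₃(ℂ)`. -/
def sisterGroup : Subgroup (GL (Fin 3) ℂ) where
  toSubmonoid := (formUnitaryGroup matJ).toSubmonoid ⊓
    sisterOrder.toSubmonoid.comap (Units.coeHom _)
  inv_mem' := by
    rintro g ⟨hg, hg_order⟩
    refine ⟨(formUnitaryGroup matJ).inv_mem hg, ?_⟩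
    change g⁻¹.val ∈ sisterOrder
    rw [coe_inv_eq_submatrix_of_mem_formUnitaryGroup (matJ_eq_permMatrix ▸ hg)]
    exact conjTranspose_submatrix_mem_tiledOrder star_mem_ringO2 (-1) (by simp [star_isq2])
      sisterExponent_rev hg_order

lemma gammaS2_iff {M : Matrix (Fin 3) (Fin 3) ℂ} :
    GammaS2 M ↔ ∃ g ∈ sisterGroup, g.val = M := by
  constructor
  · rintro ⟨⟨⟨g, rfl⟩, hg⟩, entries⟩
    exact ⟨g, ⟨hg, mem_sisterOrder.2 entries⟩, rfl⟩
  · rintro ⟨g, ⟨hg, hg_order⟩, rfl⟩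
    exact ⟨⟨g.isUnit, hg⟩, mem_sisterOrder.1 hg_order⟩

/-- `Γ_s^(2)` is a subgroup of `U(2,1;J)`: it contains the identity and is closed
under matrix multiplication and matrix inversion. -/
theorem gammaS2_subgroup :
    GammaS2 1 ∧
    (∀ M N : Matrix (Fin 3) (Fin 3) ℂ, GammaS2 M → GammaS2 N → GammaS2 (M * N)) ∧
    (∀ M : Matrix (Fin 3) (Fin 3) ℂ, GammaS2 M → GammaS2 M⁻¹) := by
  simp only [gammaS2_iff]
  refine ⟨⟨1, one_mem _, rfl⟩, ?_, ?_⟩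
  · rintro _ _ ⟨g, hg, rfl⟩ ⟨h, hh, rfl⟩
    exact ⟨g * h, mul_mem hg hh, rfl⟩
  · rintro _ ⟨g, hg, rfl⟩
    exact ⟨g⁻¹, inv_mem hg, coe_units_inv g⟩
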